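/- (Simple substitution cipher.) Let M be a finite alphabet with |M| = N ≥ 2, probability distribution P_M, and key space K = Sym(M). Set R₁ = 1 − min_{i ≠ j}(P_M(i) + P_M(j)). Then for every message length L: log(2) · R₁^L ≤ H(K | M^L C^L) ≤ log(N!) · (N(N−1)/2) · R₁^L. -/

import Mathlib

open scoped Classical

noncomputable section

/-- Probability of a word under the i.i.d. extension of the symbol distribution `P`. -/
def wordP {M : Type*} (P : M → ℝ) {L : ℕ} (m : Fin L → M) : ℝ := ∏ l, P (m l)

/-- Number of keys in `K` mapping the message `m` (letterwise) to the cryptogram `c`. -/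
def keyCount {M : Type*} (K : Subgroup (Equiv.Perm M)) {L : ℕ} (m c : Fin L → M) : ℕ :=
  Nat.card {k : Equiv.Perm M // k ∈ K ∧ ∀ l, k (m l) = c l}

/-- The key appearance equivocation `H(K | M^L C^L)` for the substitution cipher with
key space `K` (keys uniform), symbol distribution `P` and message length `L`. -/
def kae {M : Type*} [Fintype M] (K : Subgroup (Equiv.Perm M)) (P : M → ℝ) (L : ℕ) : ℝ :=
  ∑ m : Fin L → M, ∑ c : Fin L → M,
    wordP P m * (keyCount K m c : ℝ) / (Nat.card K : ℝ) * Real.log (keyCount K m c)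

/-- The fixed set `F(π)` of a permutation. -/
def fixedSet {M : Type*} [Fintype M] [DecidableEq M] (π : Equiv.Perm M) : Finset M :=
  Finset.univ.filter fun j => π j = j

/-- `P_π`: total probability of the fixed set of `π`. -/
def Pfix {M : Type*} [Fintype M] [DecidableEq M] (P : M → ℝ) (π : Equiv.Perm M) : ℝ :=
  ∑ j ∈ fixedSet π, P j

/-- A key is maximal if it is a non-identity element of `K` whose fixed set is maximal
under inclusion among fixed sets of non-identity elements of `K`. -/
def IsMaximalKey {M : Type*} [Fintype M] [DecidableEq M] (K : Subgroup (Equiv.Perm M))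
    (π : Equiv.Perm M) : Prop :=
  π ∈ K ∧ π ≠ 1 ∧ ∀ τ ∈ K, τ ≠ 1 → fixedSet π ⊆ fixedSet τ → fixedSet τ = fixedSet π

/-- The stabilizer of the message `m` in `K` is nontrivial. -/
def hasNontrivialStab {M : Type*} (K : Subgroup (Equiv.Perm M)) {L : ℕ} (m : Fin L → M) : Prop :=
  ∃ k ∈ K, k ≠ 1 ∧ ∀ l, k (m l) = m l

/-- Total probability of length-`L` messages with a nontrivial stabilizer in `K`. -/
def probNontrivial {M : Type*} [Fintype M] (K : Subgroup (Equiv.Perm M)) (P : M → ℝ)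
    (L : ℕ) : ℝ :=
  ∑ m : Fin L → M, if hasNontrivialStab K m then wordP P m else 0

/-!
The keys carrying `m` to a reachable cryptogram `c` form a coset of the stabilizer of `m`, so
`H(K | M^L C^L) = ∑ P(m) log |Stab m|`. The logarithm vanishes when the stabilizer is trivial and
otherwise lies between `log 2` and `log |K|`; hence the equivocation is, up to these factors, the
probability that a random message has a nontrivial stabilizer. A message is fixed by `π` exactly
when all its letters lie in `F(π)`, an event of probability `P_π ^ L`. A single transposition
`(i j)` in `K` gives the lower bound. For the upper bound, a permutation `π` moving `x` also moves
`π x`, so a message with a nontrivial stabilizer avoids two distinct letters, and a union bound over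
the unordered pairs of letters applies.
-/

open Finset

section UnionBound

variable {ι α R : Type*} [DecidableEq α] [AddCommMonoid R] [PartialOrder R] [IsOrderedAddMonoid R]

theorem sum_biUnion_le_sum_sum (s : Finset ι) (t : ι → Finset α) {f : α → R} (hf : ∀ a, 0 ≤ f a) :
    ∑ a ∈ s.biUnion t, f a ≤ ∑ i ∈ s, ∑ a ∈ t i, f a := by
  induction s using Finset.induction_on with
  | empty => simp
  | insert i s hi ih =>
    rw [biUnion_insert, sum_insert hi]
    calc ∑ a ∈ t i ∪ s.biUnion t, f a
        ≤ ∑ a ∈ t i ∪ s.biUnion t, f a + ∑ a ∈ t i ∩ s.biUnion t, f a :=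
          le_add_of_nonneg_right (sum_nonneg fun a _ => hf a)
      _ = ∑ a ∈ t i, f a + ∑ a ∈ s.biUnion t, f a := sum_union_inter
      _ ≤ ∑ a ∈ t i, f a + ∑ i ∈ s, ∑ a ∈ t i, f a := by gcongr

end UnionBound

section KeyCount

variable {M : Type*} {K : Subgroup (Equiv.Perm M)} {L : ℕ}

theorem exists_mem_of_keyCount_ne_zero {m c : Fin L → M} (h : keyCount K m c ≠ 0) :
    ∃ k ∈ K, ∀ l, k (m l) = c l := by
  obtain ⟨⟨k, hkK, hk⟩⟩ := (Nat.card_ne_zero.mp h).1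
  exact ⟨k, hkK, hk⟩

theorem keyCount_eq_keyCount_self {m c : Fin L → M} (h : keyCount K m c ≠ 0) :
    keyCount K m c = keyCount K m m := by
  obtain ⟨k, hkK, hk⟩ := exists_mem_of_keyCount_ne_zero h
  refine Nat.card_congr ((Equiv.mulLeft k⁻¹).subtypeEquiv fun g => ?_)
  simp only [Equiv.coe_mulLeft, K.mul_mem_cancel_left (K.inv_mem hkK), Equiv.Perm.mul_apply,
    Equiv.Perm.inv_eq_iff_eq, hk]

variable [Finite M]

theorem keyCount_le_card (m c : Fin L → M) : keyCount K m c ≤ Nat.card K :=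
  Nat.card_le_card_of_injective (fun k => (⟨k.1, k.2.1⟩ : K)) fun _ _ h =>
    Subtype.ext (Subtype.mk.inj h)

theorem hasNontrivialStab_iff_one_lt_keyCount_self {m : Fin L → M} :
    hasNontrivialStab K m ↔ 1 < keyCount K m m := by
  let identity : {k : Equiv.Perm M // k ∈ K ∧ ∀ l, k (m l) = m l} := ⟨1, K.one_mem, fun _ => rfl⟩
  rw [keyCount, Finite.one_lt_card_iff_nontrivial, nontrivial_iff_exists_ne identity]
  simp only [hasNontrivialStab, identity, Subtype.exists, ne_eq, Subtype.mk.injEq]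
  tauto

theorem keyCount_self_eq_one_of_not_hasNontrivialStab {m : Fin L → M}
    (h : ¬ hasNontrivialStab K m) : keyCount K m m = 1 := by
  have hpos : keyCount K m m ≠ 0 :=
    Nat.card_ne_zero.mpr ⟨⟨1, K.one_mem, fun _ => rfl⟩, inferInstance⟩
  rw [hasNontrivialStab_iff_one_lt_keyCount_self] at h
  omega

end KeyCount

section Words

variable {M : Type*} {P : M → ℝ} {L : ℕ}

theorem wordP_nonneg (hP : ∀ x, 0 ≤ P x) (m : Fin L → M) : 0 ≤ wordP P m :=
  prod_nonneg fun _ _ => hP _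

theorem sum_piFinset_wordP (S : Finset M) :
    ∑ m ∈ Fintype.piFinset (fun _ : Fin L => S), wordP P m = (∑ x ∈ S, P x) ^ L :=
  (sum_pow' S P L).symm

end Words

section Equivocation

variable {M : Type*} [Fintype M] {K : Subgroup (Equiv.Perm M)} {P : M → ℝ} {L : ℕ}

theorem sum_keyCount (m : Fin L → M) : ∑ c, keyCount K m c = Nat.card K := by
  let encrypt : K → Fin L → M := fun k l => k.1 (m l)
  have card_fiber (c : Fin L → M) : keyCount K m c = Nat.card {k : K // encrypt k = c} :=
    Nat.card_congr <| (Equiv.subtypeSubtypeEquivSubtypeInter _ _).symm.trans <|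
      Equiv.subtypeEquivRight fun _ => funext_iff.symm
  simp_rw [card_fiber]
  rw [← Nat.card_sigma, Nat.card_congr (Equiv.sigmaFiberEquiv encrypt)]

theorem kae_eq_sum_wordP_mul_log_keyCount_self :
    kae K P L = ∑ m : Fin L → M, wordP P m * Real.log (keyCount K m m) := by
  refine sum_congr rfl fun m _ => ?_
  have hK : (Nat.card K : ℝ) ≠ 0 := Nat.cast_ne_zero.mpr Nat.card_pos.ne'
  calc ∑ c, wordP P m * keyCount K m c / Nat.card K * Real.log (keyCount K m c)
      = ∑ c, wordP P m * keyCount K m c / Nat.card K * Real.log (keyCount K m m) := by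
        refine sum_congr rfl fun c _ => ?_
        by_cases h : keyCount K m c = 0
        · simp [h]
        · rw [keyCount_eq_keyCount_self h]
    _ = wordP P m * (∑ c, keyCount K m c : ℕ) / Nat.card K * Real.log (keyCount K m m) := by
        rw [← sum_mul, ← sum_div, ← mul_sum, Nat.cast_sum]
    _ = wordP P m * Real.log (keyCount K m m) := by
        rw [sum_keyCount, mul_div_cancel_right₀ _ hK]

theorem probNontrivial_eq_sum_filter :
    probNontrivial K P L = ∑ m : Fin L → M with hasNontrivialStab K m, wordP P m :=
  (sum_filter _ _).symm

theorem log_two_mul_probNontrivial_le_kae (hP : ∀ x, 0 ≤ P x) :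
    Real.log 2 * probNontrivial K P L ≤ kae K P L := by
  rw [kae_eq_sum_wordP_mul_log_keyCount_self, probNontrivial, mul_sum]
  refine sum_le_sum fun m _ => ?_
  split_ifs with h
  · rw [mul_comm]
    have two_le : (2 : ℝ) ≤ keyCount K m m :=
      mod_cast hasNontrivialStab_iff_one_lt_keyCount_self.mp h
    have := wordP_nonneg hP m
    gcongr
  · simp [keyCount_self_eq_one_of_not_hasNontrivialStab h]

theorem kae_le_log_card_mul_probNontrivial (hP : ∀ x, 0 ≤ P x) :
    kae K P L ≤ Real.log (Nat.card K) * probNontrivial K P L := by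
  rw [kae_eq_sum_wordP_mul_log_keyCount_self, probNontrivial, mul_sum]
  refine sum_le_sum fun m _ => ?_
  split_ifs with h
  · rw [mul_comm]
    have keyCount_pos : (0 : ℝ) < keyCount K m m :=
      mod_cast zero_lt_one.trans (hasNontrivialStab_iff_one_lt_keyCount_self.mp h)
    have := wordP_nonneg hP m
    gcongr
    exact keyCount_le_card m m
  · simp [keyCount_self_eq_one_of_not_hasNontrivialStab h]

end Equivocation

section FixedSets

variable {M : Type*} [Fintype M] [DecidableEq M] {K : Subgroup (Equiv.Perm M)} {P : M → ℝ} {L : ℕ}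

theorem Pfix_pow_le_probNontrivial (hP : ∀ x, 0 ≤ P x) {π : Equiv.Perm M} (hπK : π ∈ K)
    (hπ : π ≠ 1) : Pfix P π ^ L ≤ probNontrivial K P L := by
  rw [Pfix, ← sum_piFinset_wordP, probNontrivial_eq_sum_filter]
  refine sum_le_sum_of_subset_of_nonneg (fun m hm => ?_) fun m _ _ => wordP_nonneg hP m
  have hfix : ∀ l, π (m l) = m l := by simpa [fixedSet] using hm
  exact mem_filter.mpr ⟨mem_univ m, π, hπK, hπ, hfix⟩

theorem probNontrivial_le_sum_pow_of_fixedSet_subset (hP : ∀ x, 0 ≤ P x) {ι : Type*}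
    (T : Finset ι) (S : ι → Finset M)
    (hS : ∀ π ∈ K, π ≠ 1 → ∃ i ∈ T, fixedSet π ⊆ S i) :
    probNontrivial K P L ≤ ∑ i ∈ T, (∑ x ∈ S i, P x) ^ L := by
  simp_rw [probNontrivial_eq_sum_filter, ← sum_piFinset_wordP]
  refine le_trans ?_ (sum_biUnion_le_sum_sum _ _ (wordP_nonneg hP))
  refine sum_le_sum_of_subset_of_nonneg (fun m hm => ?_) fun m _ _ => wordP_nonneg hP m
  obtain ⟨π, hπK, hπ, hfix⟩ := (mem_filter.mp hm).2
  obtain ⟨i, hi, hsub⟩ := hS π hπK hπ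
  refine mem_biUnion.mpr ⟨i, hi, Fintype.mem_piFinset.mpr fun l => hsub ?_⟩
  simpa [fixedSet] using hfix l

theorem exists_card_two_fixedSet_subset_compl {π : Equiv.Perm M} (hπ : π ≠ 1) :
    ∃ s ∈ powersetCard 2 (univ : Finset M), fixedSet π ⊆ sᶜ := by
  obtain ⟨x, hx⟩ : ∃ x, π x ≠ x := by simpa [Equiv.ext_iff] using hπ
  refine ⟨{x, π x}, by simp [card_pair hx.symm], subset_compl_comm.mp ?_⟩
  simp [insert_subset_iff, fixedSet, hx]

theorem fixedSet_swap {i j : M} (hij : i ≠ j) : fixedSet (Equiv.swap i j) = {i, j}ᶜ := by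
  rw [← Equiv.Perm.support_swap hij]
  ext x
  simp [fixedSet]

theorem sum_compl_pair {i j : M} (hij : i ≠ j) :
    ∑ x ∈ ({i, j} : Finset M)ᶜ, P x = ∑ x, P x - (P i + P j) := by
  rw [eq_sub_iff_add_eq, ← sum_pair hij, sum_compl_add_sum]

theorem Pfix_swap {i j : M} (hij : i ≠ j) :
    Pfix P (Equiv.swap i j) = ∑ x, P x - (P i + P j) := by
  rw [Pfix, fixedSet_swap hij, sum_compl_pair hij]

end FixedSets

theorem probNontrivial_le_choose_two_mul_pow {M : Type*} [Fintype M]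
    {K : Subgroup (Equiv.Perm M)} {P : M → ℝ} {L : ℕ} (hP : ∀ x, 0 ≤ P x) {c : ℝ}
    (hc : ∀ i j, i ≠ j → c ≤ P i + P j) :
    probNontrivial K P L ≤ (Fintype.card M).choose 2 * (∑ x, P x - c) ^ L := by
  calc probNontrivial K P L
      ≤ ∑ s ∈ powersetCard 2 (univ : Finset M), (∑ x ∈ sᶜ, P x) ^ L :=
        probNontrivial_le_sum_pow_of_fixedSet_subset hP _ _ fun _ _ hπ =>
          exists_card_two_fixedSet_subset_compl hπ
    _ ≤ ∑ _s ∈ powersetCard 2 (univ : Finset M), (∑ x, P x - c) ^ L := by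
        refine sum_le_sum fun s hs => pow_le_pow_left₀ (sum_nonneg fun x _ => hP x) ?_ L
        obtain ⟨i, j, hij, rfl⟩ := card_eq_two.mp (mem_powersetCard.mp hs).2
        rw [sum_compl_pair hij]
        exact sub_le_sub_left (hc i j hij) _
    _ = (Fintype.card M).choose 2 * (∑ x, P x - c) ^ L := by
        rw [sum_const, card_powersetCard, card_univ, nsmul_eq_mul]

theorem kae_bounds_simple_substitution_general {M : Type*} [Fintype M] [DecidableEq M]
    {K : Subgroup (Equiv.Perm M)} {P : M → ℝ} (hP : ∀ x, 0 ≤ P x) (hsum : ∑ x, P x = 1)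
    {i j : M} (hij : i ≠ j) (hswap : Equiv.swap i j ∈ K)
    (hmin : ∀ i' j', i' ≠ j' → P i + P j ≤ P i' + P j') (L : ℕ) :
    Real.log 2 * (1 - (P i + P j)) ^ L ≤ kae K P L ∧
      kae K P L ≤ Real.log (Nat.card K) *
        (Fintype.card M * (Fintype.card M - 1) / 2) * (1 - (P i + P j)) ^ L := by
  constructor
  · calc Real.log 2 * (1 - (P i + P j)) ^ L
        = Real.log 2 * Pfix P (Equiv.swap i j) ^ L := by rw [Pfix_swap hij, hsum]
      _ ≤ Real.log 2 * probNontrivial K P L := by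
          gcongr
          exact Pfix_pow_le_probNontrivial hP hswap (Equiv.swap_eq_one_iff.not.mpr hij)
      _ ≤ kae K P L := log_two_mul_probNontrivial_le_kae hP
  · calc kae K P L
        ≤ Real.log (Nat.card K) * probNontrivial K P L := kae_le_log_card_mul_probNontrivial hP
      _ ≤ Real.log (Nat.card K) *
            ((Fintype.card M).choose 2 * (∑ x, P x - (P i + P j)) ^ L) := by
          gcongr
          exact probNontrivial_le_choose_two_mul_pow hP hmin
      _ = Real.log (Nat.card K) *
            (Fintype.card M * (Fintype.card M - 1) / 2) * (1 - (P i + P j)) ^ L := by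
          rw [Nat.cast_choose_two, hsum, mul_assoc]

/-- Simple substitution cipher:
`log 2 · R₁^L ≤ H(K | M^L C^L) ≤ log(N!) · (N(N-1)/2) · R₁^L` with
`R₁ = 1 - min_{i ≠ j}(P i + P j)`. -/
theorem kae_bounds_simple_substitution {M : Type*} [Fintype M] [DecidableEq M]
    (hN : 2 ≤ Fintype.card M) (P : M → ℝ)
    (hP : ∀ x, 0 ≤ P x) (hsum : ∑ x, P x = 1)
    (c : ℝ) (hc : IsLeast {y : ℝ | ∃ i j : M, i ≠ j ∧ P i + P j = y} c) (L : ℕ) :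
    Real.log 2 * (1 - c) ^ L ≤ kae (⊤ : Subgroup (Equiv.Perm M)) P L ∧
      kae (⊤ : Subgroup (Equiv.Perm M)) P L ≤
        Real.log (Nat.factorial (Fintype.card M)) *
          (Fintype.card M * (Fintype.card M - 1) / 2) * (1 - c) ^ L := by
  obtain ⟨⟨i, j, hij, rfl⟩, hmin⟩ := hc
  have card_top : Nat.card (⊤ : Subgroup (Equiv.Perm M)) = (Fintype.card M).factorial := by
    rw [Subgroup.card_top, Nat.card_perm, Nat.card_eq_fintype_card]
  exact card_top ▸ kae_bounds_simple_substitution_general hP hsum hij (Subgroup.mem_top _)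
    (fun i' j' hij' => hmin ⟨i', j', hij', rfl⟩) L
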